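/- Let r ≥ 2, let w : Fin (r-2) → (Fin r → ℝ), and for x, y ∈ (Fin r → ℝ) write [x y] for the determinant of the r×r real matrix whose first r−2 columns are w 0, …, w (r−3) and last two columns are x and y. Let a, b, c, d ∈ (Fin r → ℝ) and suppose [a b]·[c d] ≥ 0 and [a d]·[b c] ≥ 0. Then [a b]·[c d] ≤ [a c]·[b d] and [a d]·[b c] ≤ [a c]·[b d]. -/

import Mathlib

/-- The bracket `[x y]`: the determinant of the `r × r` real matrix whose first
`r - 2` columns are `w 0, …, w (r-3)` and whose last two columns are `x` and `y`. -/
noncomputable def bracket (r : ℕ) (w : Fin (r - 2) → (Fin r → ℝ)) (x y : Fin r → ℝ) : ℝ :=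
  Matrix.det (Matrix.of fun i j : Fin r =>
    if h : (j : ℕ) < r - 2 then w ⟨j, h⟩ i
    else if (j : ℕ) = r - 2 then x i else y i)

/-!
The biquadratic inequalities are the three-term Grassmann–Plücker relation
`[a c][b d] = [a b][c d] + [a d][b c]` read with signs: the left-hand side is a sum of two
nonnegative terms, so it dominates each of them. The relation is the case of two determinants
that agree in all but two columns in the exchange identity, which expands `det A * det B` by
swapping a fixed column of `B` with each column of `A`; the exchange identity itself is Cramer's
rule for `A`, inserted into the fixed column of `B`.
-/

open Matrix

section ColumnBracket

variable {n R : Type*} [Fintype n] [DecidableEq n] [CommRing R]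

theorem det_smul_eq_sum_det_updateCol_smul_col (A : Matrix n n R) (v : n → R) :
    A.det • v = ∑ k, (A.updateCol k v).det • A.col k := by
  simp only [← mulVec_cramer A v, mulVec_eq_sum, cramer_apply, op_smul_eq_smul, Matrix.col]

theorem det_mul_det_eq_sum_exchange_col (A B : Matrix n n R) (i : n) :
    A.det * B.det =
      ∑ k, (A.updateCol k (B.col i)).det * (B.updateCol i (A.col k)).det :=
  calc A.det * B.det
    _ = B.cramer (A.det • B.col i) i := by
        have hB : B.updateCol i (B.col i) = B := updateCol_eq_self B i
        rw [map_smul, Pi.smul_apply, cramer_apply, hB, smul_eq_mul]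
    _ = B.cramer (∑ k, (A.updateCol k (B.col i)).det • A.col k) i := by
        rw [det_smul_eq_sum_det_updateCol_smul_col]
    _ = ∑ k, (A.updateCol k (B.col i)).det * (B.updateCol i (A.col k)).det := by
        simp only [← cramer_apply, map_sum, map_smul, Finset.sum_apply, Pi.smul_apply, smul_eq_mul]

/-- The bracket `[x y]` over an arbitrary commutative ring and with its two free columns in
arbitrary positions `i` and `j`: the determinant of `M` with columns `i` and `j` replaced by `x`
and `y`. For `i = j` the vector `y` overwrites `x`. -/
def columnBracket (M : Matrix n n R) (i j : n) (x y : n → R) : R :=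
  ((M.updateCol i x).updateCol j y).det

theorem grassmannPlucker_columnBracket (M : Matrix n n R) {i j : n} (hij : i ≠ j)
    (a b c d : n → R) :
    columnBracket M i j a c * columnBracket M i j b d =
      columnBracket M i j a b * columnBracket M i j c d +
        columnBracket M i j a d * columnBracket M i j b c := by
  let A := (M.updateCol i a).updateCol j c
  let B := (M.updateCol i b).updateCol j d
  have hBi : B.col i = b := funext fun l => by simp [B, hij]
  have hAi : A.col i = a := funext fun l => by simp [A, hij]
  have hAj : A.col j = c := funext fun l => by simp [A]
  have exchange_shared_col (k : n) (hk : k ≠ i ∧ k ≠ j) :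
      (A.updateCol k (B.col i)).det * (B.updateCol i (A.col k)).det = 0 := by
    have hdet : (B.updateCol i (A.col k)).det = 0 :=
      det_zero_of_column_eq hk.1 fun l => by simp [A, B, hk.1, hk.2]
    rw [hdet, mul_zero]
  calc A.det * B.det
    _ = (A.updateCol i b).det * (B.updateCol i a).det +
          (A.updateCol j b).det * (B.updateCol i c).det := by
        rw [det_mul_det_eq_sum_exchange_col A B i, Fintype.sum_eq_add i j hij exchange_shared_col,
          hBi, hAi, hAj]
    _ = columnBracket M i j b c * columnBracket M i j a d +
          columnBracket M i j a b * columnBracket M i j c d := by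
        simp only [A, B, columnBracket, updateCol_comm _ hij, updateCol_idem]
    _ = _ := by ring

theorem biquadratic_inequalities_general [PartialOrder R] [IsOrderedAddMonoid R]
    (M : Matrix n n R) {i j : n} (hij : i ≠ j) (a b c d : n → R)
    (hAB : 0 ≤ columnBracket M i j a b * columnBracket M i j c d)
    (hEF : 0 ≤ columnBracket M i j a d * columnBracket M i j b c) :
    columnBracket M i j a b * columnBracket M i j c d ≤
        columnBracket M i j a c * columnBracket M i j b d ∧
      columnBracket M i j a d * columnBracket M i j b c ≤
        columnBracket M i j a c * columnBracket M i j b d := by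
  rw [grassmannPlucker_columnBracket M hij a b c d]
  exact ⟨le_add_of_nonneg_right hEF, le_add_of_nonneg_left hAB⟩

end ColumnBracket

theorem bracket_eq_columnBracket {r : ℕ} (hr : 2 ≤ r) (w : Fin (r - 2) → (Fin r → ℝ))
    (x y : Fin r → ℝ) :
    bracket r w x y =
      columnBracket (of fun (k l : Fin r) => if h : (l : ℕ) < r - 2 then w ⟨l, h⟩ k else 0)
        ⟨r - 2, by lia⟩ ⟨r - 1, by lia⟩ x y := by
  unfold bracket columnBracket
  congr 1
  ext k l
  simp only [updateCol_apply, of_apply, Fin.ext_iff]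
  split_ifs <;> first | rfl | lia

/-- Normalized pairs satisfy the non-strict biquadratic inequalities. -/
theorem biquadratic_inequalities (r : ℕ) (hr : 2 ≤ r) (w : Fin (r - 2) → (Fin r → ℝ))
    (a b c d : Fin r → ℝ)
    (hAB : bracket r w a b * bracket r w c d ≥ 0)
    (hEF : bracket r w a d * bracket r w b c ≥ 0) :
    bracket r w a b * bracket r w c d ≤ bracket r w a c * bracket r w b d ∧
      bracket r w a d * bracket r w b c ≤ bracket r w a c * bracket r w b d := by
  simp only [bracket_eq_columnBracket hr] at hAB hEF ⊢
  exact biquadratic_inequalities_general _ (by simp only [ne_eq, Fin.ext_iff]; lia) a b c d hAB hEF
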